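/- arXiv:0908.1872 — 2 statements merged into one kernel-verified Lean document; each statement's English description precedes it below -/
import Mathlib

section
/- (Directedness of Weil algebras.) Let (A₁, N₁) and (A₂, N₂) be Weil algebras. Then there exist a Weil algebra (A, N) and surjective ℝ-algebra homomorphisms ρ₁ : A → A₁ and ρ₂ : A → A₂. -/
/-!
Both nilpotent ideals sit inside the single nilpotent ideal `N = N₁ × N₂` of `A₁ × A₂`. Viewed as
a non-unital algebra, `N` has a unitization `R ⊕ N`, which is a Weil algebra with augmentation
ideal `N` and maps to `A₁ × A₂` by `(r, n) ↦ r + n`. Composing with a projection to `Aᵢ` gives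
`(r, n) ↦ r + nᵢ`, which is onto because `Aᵢ = R·1 + Nᵢ`.
-/

noncomputable section

/-- A Weil algebra: a finite-dimensional commutative unital `ℝ`-algebra `A` together with a
nilpotent ideal `N` such that `A = ℝ·1 ⊕ N` as real vector spaces. -/
structure WeilAlgebra where
  carrier : Type
  [instCommRing : CommRing carrier]
  [instAlgebra : Algebra ℝ carrier]
  [instFinDim : FiniteDimensional ℝ carrier]
  N : Ideal carrier
  nilpotent : IsNilpotent N
  compl : IsCompl (Submodule.span ℝ {(1 : carrier)}) (Submodule.restrictScalars ℝ N)

attribute [instance] WeilAlgebra.instCommRing WeilAlgebra.instAlgebra WeilAlgebra.instFinDim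

/-- The notion of a Weil algebra `(A, N)` over an arbitrary commutative base ring `R`, expressed as
a property of the ideal `N`; over a general base, finite-dimensionality becomes finite generation
of `A` as a module. -/
structure IsWeilIdeal (R : Type*) {A : Type*} [CommRing R] [CommRing A] [Algebra R A]
    (N : Ideal A) : Prop where
  finite : Module.Finite R A
  isNilpotent : IsNilpotent N
  isCompl : IsCompl (Submodule.span R {(1 : A)}) (N.restrictScalars R)

theorem IsWeilIdeal.fg {R A : Type*} [CommRing R] [CommRing A] [Algebra R A] {N : Ideal A}
    (h : IsWeilIdeal R N) : (N.restrictScalars R).FG :=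
  have := h.finite
  Submodule.CoFG.fg_of_isCompl h.isCompl inferInstance

theorem WeilAlgebra.isWeilIdeal (W : WeilAlgebra) : IsWeilIdeal ℝ W.N :=
  ⟨W.instFinDim, W.nilpotent, W.compl⟩

theorem isNilpotent_prod_ideal {A B : Type*} [CommSemiring A] [CommSemiring B] {I : Ideal A}
    {J : Ideal B} (hI : IsNilpotent I) (hJ : IsNilpotent J) : IsNilpotent (I.prod J) := by
  obtain ⟨m, hm⟩ := hI
  obtain ⟨n, hn⟩ := hJ
  have h_fst : (I.prod J) ^ m ≤ RingHom.ker (RingHom.fst A B) :=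
    calc
      (I.prod J) ^ m ≤ (I.comap (RingHom.fst A B)) ^ m := Ideal.pow_right_mono inf_le_left m
      _ ≤ (I ^ m).comap (RingHom.fst A B) := Ideal.le_comap_pow _ m
      _ = RingHom.ker (RingHom.fst A B) := congrArg _ hm
  have h_snd : (I.prod J) ^ n ≤ RingHom.ker (RingHom.snd A B) :=
    calc
      (I.prod J) ^ n ≤ (J.comap (RingHom.snd A B)) ^ n := Ideal.pow_right_mono inf_le_right n
      _ ≤ (J ^ n).comap (RingHom.snd A B) := Ideal.le_comap_pow _ n
      _ = RingHom.ker (RingHom.snd A B) := congrArg _ hn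
  exact ⟨m + n, eq_bot_iff.2 fun x hx ↦ Prod.ext
    (h_fst (Ideal.pow_le_pow_right (m.le_add_right n) hx))
    (h_snd (Ideal.pow_le_pow_right (n.le_add_left m) hx))⟩

theorem isNilpotent_of_map_of_disjoint_ker {A B : Type*} [CommRing A] [CommRing B] {f : A →+* B}
    {I : Ideal A} (hI : IsNilpotent (I.map f)) (h : Disjoint I (RingHom.ker f)) :
    IsNilpotent I := by
  obtain ⟨n, hn⟩ := hI
  have h_ker : I ^ n ≤ RingHom.ker f :=
    Ideal.map_le_iff_le_comap.1 ((Ideal.map_pow f I n).trans hn).le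
  exact ⟨n + 1, eq_bot_iff.2 <|
    h (Ideal.pow_le_self n.succ_ne_zero) ((Ideal.pow_le_pow_right n.le_succ).trans h_ker)⟩

theorem isCompl_span_one_ker {R A : Type*} [CommRing R] [Ring A] [Algebra R A] (ε : A →ₐ[R] R) :
    IsCompl (Submodule.span R {(1 : A)}) ((RingHom.ker ε).restrictScalars R) := by
  constructor
  · refine Submodule.disjoint_def.2 fun x hx hε ↦ ?_
    obtain ⟨r, rfl⟩ := Submodule.mem_span_singleton.1 hx
    have hr : r = 0 := by simpa [RingHom.mem_ker] using hε
    rw [hr, zero_smul]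
  · refine Submodule.codisjoint_iff_exists_add_eq.2 fun x ↦ ⟨ε x • 1, x - ε x • 1, ?_, ?_, ?_⟩
    · exact Submodule.smul_mem _ _ (Submodule.mem_span_singleton_self _)
    · simp [RingHom.mem_ker]
    · exact add_sub_cancel _ _

section Unitization

variable (R : Type*) {A : Type*} [CommRing R] [CommRing A] [Algebra R A] {N : Ideal A}

/-- An ideal regarded as a non-unital `R`-subalgebra, so that it has a unitization over `R`. -/
def idealNonUnitalSubalgebra (N : Ideal A) : NonUnitalSubalgebra R A :=
  (N.restrictScalars R).toNonUnitalSubalgebra fun _ _ _ hy ↦ N.mul_mem_left _ hy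

theorem isNilpotent_ker_unitization_fstHom (hN : IsNilpotent N) :
    IsNilpotent (RingHom.ker (Unitization.fstHom R (idealNonUnitalSubalgebra R N))) := by
  set I := RingHom.ker (Unitization.fstHom R (idealNonUnitalSubalgebra R N))
  let φ := NonUnitalSubalgebra.unitization (idealNonUnitalSubalgebra R N)
  have hφ : ∀ x ∈ I, φ x = x.snd := fun x (hx : x.fst = 0) ↦ by
    simp [φ, NonUnitalSubalgebra.unitization_apply, hx]
  have h_map : I.map φ ≤ N := Ideal.map_le_iff_le_comap.2 fun x hx ↦ by
    rw [Ideal.mem_comap, hφ x hx]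
    exact x.snd.2
  have h_disjoint : Disjoint I (RingHom.ker φ) := Submodule.disjoint_def.2 fun x hx hx' ↦
    Unitization.ext hx (Subtype.ext ((hφ x hx).symm.trans hx'))
  obtain ⟨n, hn⟩ := hN
  exact isNilpotent_of_map_of_disjoint_ker (f := φ.toRingHom)
    ⟨n, le_bot_iff.1 ((Ideal.pow_right_mono h_map n).trans_eq hn)⟩ h_disjoint

theorem isWeilIdeal_ker_unitization_fstHom (hfin : (N.restrictScalars R).FG) (hN : IsNilpotent N) :
    IsWeilIdeal R (RingHom.ker (Unitization.fstHom R (idealNonUnitalSubalgebra R N))) where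
  finite :=
    have : Module.Finite R (idealNonUnitalSubalgebra R N) := Module.Finite.of_fg hfin
    .equiv (Unitization.linearEquiv R R (idealNonUnitalSubalgebra R N)).symm
  isNilpotent := isNilpotent_ker_unitization_fstHom R hN
  isCompl := isCompl_span_one_ker _

theorem comp_unitization_surjective {B : Type*} [Ring B] [Algebra R B] {π : A →ₐ[R] B}
    (hπ : Function.Surjective π)
    (hN : Codisjoint (Submodule.span R {(1 : B)}) ((N.map π).restrictScalars R)) :
    Function.Surjective
      (π.comp (NonUnitalSubalgebra.unitization (idealNonUnitalSubalgebra R N))) := by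
  intro b
  obtain ⟨s, n, hs, hn, rfl⟩ := Submodule.codisjoint_iff_exists_add_eq.1 hN b
  obtain ⟨r, rfl⟩ := Submodule.mem_span_singleton.1 hs
  obtain ⟨a, ha, rfl⟩ := (Ideal.mem_map_iff_of_surjective π hπ).1 hn
  refine ⟨⟨r, ⟨a, ha⟩⟩, ?_⟩
  simp [NonUnitalSubalgebra.unitization_apply, Algebra.algebraMap_eq_smul_one]

end Unitization

universe u v w

theorem weil_algebras_directed_general {R : Type u} {A₁ : Type v} {A₂ : Type w}
    [CommRing R] [CommRing A₁] [CommRing A₂] [Algebra R A₁] [Algebra R A₂]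
    {N₁ : Ideal A₁} {N₂ : Ideal A₂} (h₁ : IsWeilIdeal R N₁) (h₂ : IsWeilIdeal R N₂) :
    ∃ (A : Type (max u v w)) (_ : CommRing A) (_ : Algebra R A) (N : Ideal A)
      (ρ₁ : A →ₐ[R] A₁) (ρ₂ : A →ₐ[R] A₂),
      IsWeilIdeal R N ∧ Function.Surjective ρ₁ ∧ Function.Surjective ρ₂ := by
  have hfin : ((N₁.prod N₂).restrictScalars R).FG := h₁.fg.prod h₂.fg
  have hnil : IsNilpotent (N₁.prod N₂) := isNilpotent_prod_ideal h₁.isNilpotent h₂.isNilpotent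
  refine ⟨Unitization R (idealNonUnitalSubalgebra R (N₁.prod N₂)), inferInstance, inferInstance,
    _, _, _, isWeilIdeal_ker_unitization_fstHom R hfin hnil,
    comp_unitization_surjective R (π := AlgHom.fst R A₁ A₂) Prod.fst_surjective ?_,
    comp_unitization_surjective R (π := AlgHom.snd R A₁ A₂) Prod.snd_surjective ?_⟩
  · exact (Ideal.map_fst_prod N₁ N₂).symm ▸ h₁.isCompl.codisjoint
  · exact (Ideal.map_snd_prod N₁ N₂).symm ▸ h₂.isCompl.codisjoint

/-- Directedness of Weil algebras: any two Weil algebras are simultaneously surjective images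
of a third one. -/
theorem weil_algebras_directed (W₁ W₂ : WeilAlgebra) :
    ∃ (W : WeilAlgebra) (ρ₁ : W.carrier →ₐ[ℝ] W₁.carrier) (ρ₂ : W.carrier →ₐ[ℝ] W₂.carrier),
      Function.Surjective ρ₁ ∧ Function.Surjective ρ₂ := by
  obtain ⟨A, _, _, N, ρ₁, ρ₂, hN, hρ⟩ :=
    weil_algebras_directed_general W₁.isWeilIdeal W₂.isWeilIdeal
  have := hN.finite
  exact ⟨⟨A, N, hN.isNilpotent, hN.isCompl⟩, ρ₁, ρ₂, hρ⟩
end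
end

section
/- (Quotients of the smooth function algebra by powers of a point ideal are Weil algebras.) Let x ∈ ℝ^p and k ∈ ℕ, and let A := C^∞(ℝ^p, ℝ) / I_x^{k+1} with quotient map π. Then A is a finite-dimensional commutative ℝ-algebra of dimension equal to the binomial coefficient C(p+k, p), the ideal π(I_x) = I_x / I_x^{k+1} is nilpotent (its (k+1)-st power is zero), and the subspaces ℝ·1 and π(I_x) of A are complementary; in particular (A, π(I_x)) is a Weil algebra. -/
open scoped Manifold

noncomputable section

/-- The algebra of smooth real-valued functions on `ℝ^p`. -/
abbrev SmoothFn (p : ℕ) : Type :=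
  ContMDiffMap (𝓡 p) 𝓘(ℝ, ℝ) (EuclideanSpace ℝ (Fin p)) ℝ (⊤ : ℕ∞)

/-- Evaluation at a point, as an `ℝ`-algebra homomorphism `C^∞(ℝ^p, ℝ) → ℝ`. -/
def evalAlgHom {p : ℕ} (x : EuclideanSpace ℝ (Fin p)) : SmoothFn p →ₐ[ℝ] ℝ where
  toFun f := f x
  map_one' := rfl
  map_mul' _ _ := rfl
  map_zero' := rfl
  map_add' _ _ := rfl
  commutes' _ := rfl

/-!
Integrating the derivative of `f` along the segments from `x` gives Hadamard's lemma: `I_x` is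
generated by the coordinates centred at `x`. Substituting such expansions into their own
coefficients, every `f` agrees modulo `I_x ^ (k + 1)` with a polynomial of degree at most `k` in
these coordinates. The polynomial is unique, since elements of `I_x ^ (k + 1)` are
`O(‖y - x‖ ^ (k + 1))` and no nonzero polynomial of degree at most `k` decays that fast along
every line through `x`. Hence the dimension is the number of monomials of degree at most `k`.
-/

open scoped Topology ContDiff
open Asymptotics MvPolynomial

section ParametricIntegral

universe u

variable {E F : Type u} [NormedAddCommGroup E] [NormedSpace ℝ E] [NormedAddCommGroup F]
  [NormedSpace ℝ F]

theorem hasFDerivAt_intervalIntegral_of_contDiff {G : E × ℝ → F} (hG : ContDiff ℝ 1 G) (a b : ℝ)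
    (y : E) :
    HasFDerivAt (fun z => ∫ t in a..b, G (z, t))
      (∫ t in a..b, (fderiv ℝ G (y, t)).comp (ContinuousLinearMap.inl ℝ E ℝ)) y := by
  have hG' : Continuous fun q => (fderiv ℝ G q).comp (ContinuousLinearMap.inl ℝ E ℝ) :=
    (hG.continuous_fderiv one_ne_zero).clm_comp continuous_const
  obtain ⟨C, hC⟩ := (isCompact_uIcc (a := a) (b := b)).exists_bound_of_continuousOn
    (hG'.comp (Continuous.prodMk_right y)).continuousOn
  have bound_near : ∀ᶠ z in 𝓝 y, ∀ t ∈ Set.uIcc a b,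
      ‖(fderiv ℝ G (z, t)).comp (ContinuousLinearMap.inl ℝ E ℝ)‖ < C + 1 :=
    isCompact_uIcc.eventually_forall_of_forall_eventually fun t ht =>
      hG'.norm.continuousAt.eventually_lt continuousAt_const ((hC t ht).trans_lt (lt_add_one C))
  refine intervalIntegral.hasFDerivAt_integral_of_dominated_of_fderiv_le
    (F' := fun z t => (fderiv ℝ G (z, t)).comp (ContinuousLinearMap.inl ℝ E ℝ))
    (bound := fun _ => C + 1) bound_near
    (.of_forall fun z => (hG.continuous.comp (.prodMk_right z)).aestronglyMeasurable)
    ((hG.continuous.comp (.prodMk_right y)).intervalIntegrable _ _)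
    (hG'.comp (.prodMk_right y)).aestronglyMeasurable
    (.of_forall fun t ht z hz => (hz t (Set.uIoc_subset_uIcc ht)).le)
    intervalIntegrable_const (.of_forall fun t _ z _ => ?_)
  exact (hG.differentiable one_ne_zero (z, t)).hasFDerivAt.comp z (hasFDerivAt_prodMk_left z t)

theorem contDiff_intervalIntegral {n : ℕ∞} {G : E × ℝ → F} (hG : ContDiff ℝ n G) (a b : ℝ) :
    ContDiff ℝ n fun y => ∫ t in a..b, G (y, t) := by
  suffices h : ∀ (m : ℕ) {F : Type u} [NormedAddCommGroup F] [NormedSpace ℝ F] {G : E × ℝ → F},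
      ContDiff ℝ m G → ContDiff ℝ m fun y => ∫ t in a..b, G (y, t) from
    contDiff_iff_forall_nat_le.2 fun m hm => h m (hG.of_le (mod_cast hm))
  intro m
  induction m with
  | zero =>
    intro F _ _ G hG
    rw [Nat.cast_zero, contDiff_zero] at hG ⊢
    exact intervalIntegral.continuous_parametric_intervalIntegral_of_continuous'
      (f := fun y t => G (y, t)) hG a b
  | succ m ih =>
    intro F _ _ G hG
    rw [Nat.cast_succ] at hG ⊢
    have hG' : ContDiff ℝ m fun q => (fderiv ℝ G q).comp (ContinuousLinearMap.inl ℝ E ℝ) :=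
      (hG.fderiv_right le_rfl).clm_comp contDiff_const
    exact contDiff_succ_iff_hasFDerivAt.2 ⟨_, ih hG',
      hasFDerivAt_intervalIntegral_of_contDiff (hG.of_le le_add_self) a b⟩

theorem sub_eq_integral_fderiv_segment [CompleteSpace F] {f : E → F} (hf : ContDiff ℝ 1 f)
    (x y : E) : f y - f x = (∫ t in (0 : ℝ)..1, fderiv ℝ f (x + t • (y - x))) (y - x) := by
  have hf' : Continuous fun t : ℝ => fderiv ℝ f (x + t • (y - x)) :=
    (hf.continuous_fderiv one_ne_zero).comp (by fun_prop)
  have hderiv (t : ℝ) : HasDerivAt (fun s : ℝ => f (x + s • (y - x)))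
      (fderiv ℝ f (x + t • (y - x)) (y - x)) t := by
    have hline : HasDerivAt (fun s : ℝ => x + s • (y - x)) (y - x) t := by
      simpa using ((hasDerivAt_id t).smul_const (y - x)).const_add x
    exact (hf.differentiable one_ne_zero _).hasFDerivAt.comp_hasDerivAt t hline
  rw [ContinuousLinearMap.intervalIntegral_apply (hf'.intervalIntegrable 0 1),
    intervalIntegral.integral_eq_sub_of_hasDerivAt (fun t _ => hderiv t)
      ((hf'.clm_apply continuous_const).intervalIntegrable 0 1)]
  simp

theorem exists_contDiff_eq_add_apply_sub [CompleteSpace F] {n : ℕ∞} {f : E → F}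
    (hf : ContDiff ℝ (n + 1) f) (x : E) :
    ∃ g : E → E →L[ℝ] F, ContDiff ℝ n g ∧ ∀ y, f y = f x + g y (y - x) := by
  refine ⟨fun y => ∫ t in (0 : ℝ)..1, fderiv ℝ f (x + t • (y - x)),
    contDiff_intervalIntegral (G := fun q => fderiv ℝ f (x + q.2 • (q.1 - x))) ?_ 0 1,
    fun y => ?_⟩
  · exact (hf.fderiv_right le_rfl).comp (by fun_prop)
  · rw [← sub_eq_integral_fderiv_segment (hf.of_le le_add_self), add_sub_cancel]

end ParametricIntegral

section Augmentation

variable {R S : Type*} [CommRing R] [CommRing S] [Algebra R S]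

theorem isAugmentation_ker (ε : S →ₐ[R] R) : (RingHom.ker ε).IsAugmentation R := by
  refine (Ideal.isAugmentation_iff R _).2 ⟨?_, ?_⟩
  · rw [Submodule.disjoint_def]
    rintro _ hc hker
    obtain ⟨c, rfl⟩ := Submodule.mem_one.1 hc
    have hc : c = 0 := by simpa using hker
    rw [hc, map_zero]
  · rw [codisjoint_iff, eq_top_iff]
    intro a _
    refine Submodule.mem_sup.2 ⟨algebraMap R S (ε a), Submodule.algebraMap_mem _,
      a - algebraMap R S (ε a), ?_, add_sub_cancel _ _⟩
    simp [RingHom.mem_ker]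

theorem isAugmentation_map_mk_ker {ε : S →ₐ[R] R} {I : Ideal S} (hI : I ≤ RingHom.ker ε) :
    ((RingHom.ker ε).map (Ideal.Quotient.mk I)).IsAugmentation R := by
  have hker : RingHom.ker (Ideal.Quotient.liftₐ I ε hI) =
      (RingHom.ker ε).map (Ideal.Quotient.mk I) :=
    Ideal.ker_quotient_lift (ε : S →+* R) hI
  exact hker ▸ isAugmentation_ker _

theorem exists_totalDegree_le_sub_aeval_mem_ker_pow {ι : Type*} {ε : S →ₐ[R] R} {c : ι → S}
    (hc : RingHom.ker ε = Ideal.span (Set.range c)) (n : ℕ) (f : S) :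
    ∃ P : MvPolynomial ι R, P.totalDegree ≤ n ∧ f - aeval c P ∈ RingHom.ker ε ^ (n + 1) := by
  have sub_mem (f : S) : f - algebraMap R S (ε f) ∈ RingHom.ker ε := by simp [RingHom.mem_ker]
  induction n generalizing f with
  | zero => exact ⟨C (ε f), by simp, by simp [RingHom.mem_ker]⟩
  | succ n ih =>
    obtain ⟨g, hg⟩ := Finsupp.mem_ideal_span_range_iff_exists_finsupp.1 (hc ▸ sub_mem f)
    choose P hdeg hP using fun i => ih (g i)
    refine ⟨C (ε f) + ∑ i ∈ g.support, P i * X i, ?_, ?_⟩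
    · refine (totalDegree_add _ _).trans (max_le (by simp) ?_)
      exact totalDegree_finsetSum_le fun i _ => (totalDegree_mul _ _).trans
        (add_le_add (hdeg i) (isHomogeneous_X R i).totalDegree_le)
    · have key : f - aeval c (C (ε f) + ∑ i ∈ g.support, P i * X i) =
          ∑ i ∈ g.support, (g i - aeval c (P i)) * c i := by
        simp only [map_add, map_sum, map_mul, algHom_C, aeval_X, sub_mul, Finset.sum_sub_distrib]
        rw [← sub_sub, ← hg, Finsupp.sum]
      rw [key, pow_succ]
      refine Ideal.sum_mem _ fun i _ => Ideal.mul_mem_mul (hP i) ?_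
      exact hc ▸ Ideal.subset_span (Set.mem_range_self i)

end Augmentation

section PolynomialGrowth

variable {𝕜 : Type*} [NontriviallyNormedField 𝕜]

theorem X_pow_dvd_of_eval_isBigO {q : Polynomial 𝕜} {n : ℕ}
    (hq : (fun t => q.eval t) =O[𝓝 0] fun t => t ^ n) : Polynomial.X ^ n ∣ q := by
  induction n with
  | zero => simp
  | succ n ih =>
    have pow_succ_isBigO : (fun t : 𝕜 => t ^ (n + 1)) =O[𝓝 0] fun t => t ^ n :=
      (isLittleO_pow_pow n.lt_succ_self).isBigO
    obtain ⟨r, rfl⟩ := ih (hq.trans pow_succ_isBigO)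
    have hr : (fun t => r.eval t) =O[𝓝[≠] 0] fun t => t := by
      have hne : ∀ᶠ t : 𝕜 in 𝓝[≠] 0, t ^ n ≠ 0 :=
        eventually_mem_nhdsWithin.mono fun t ht => pow_ne_zero n ht
      simp only [Polynomial.eval_mul, Polynomial.eval_pow, Polynomial.eval_X] at hq
      refine ((isBigO_mul_iff_isBigO_div hne).1 (hq.mono nhdsWithin_le_nhds)).congr' .rfl ?_
      filter_upwards [hne] with t ht
      rw [pow_succ, mul_div_cancel_left₀ _ ht]
    have hr0 : r.eval 0 = 0 :=
      tendsto_nhds_unique (r.continuous.continuousAt.mono_left nhdsWithin_le_nhds)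
        (hr.trans_tendsto nhdsWithin_le_nhds)
    rw [pow_succ]
    exact mul_dvd_mul_left _
      (Polynomial.X_dvd_iff.2 (r.coeff_zero_eq_eval_zero.trans hr0))

theorem eq_zero_of_forall_eval_smul_isBigO {ι : Type*} {P : MvPolynomial ι 𝕜} {k : ℕ}
    (hdeg : P.totalDegree ≤ k)
    (hP : ∀ v : ι → 𝕜, (fun t : 𝕜 => eval (t • v) P) =O[𝓝 0] fun t => t ^ (k + 1)) : P = 0 := by
  refine MvPolynomial.funext fun v => ?_
  let q : Polynomial 𝕜 := aeval (fun i => Polynomial.X * Polynomial.C (v i)) P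
  have eval_q (t : 𝕜) : q.eval t = eval (t • v) P := by
    rw [← Polynomial.coe_aeval_eq_eval, comp_aeval_apply, aeval_eq_eval]
    simp [Pi.smul_def, mul_comm (v _)]
  have natDegree_q : q.natDegree ≤ k :=
    (aeval_natDegree_le P hdeg _ fun i => Polynomial.natDegree_mul_le.trans (by simp)).trans_eq
      (mul_one k)
  have dvd_q : Polynomial.X ^ (k + 1) ∣ q := X_pow_dvd_of_eval_isBigO (by simpa [eval_q] using hP v)
  have q_eq_zero : q = 0 :=
    Polynomial.eq_zero_of_dvd_of_natDegree_lt dvd_q (by simpa using Nat.lt_succ_of_le natDegree_q)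
  simpa [q_eq_zero] using (eval_q 1).symm

end PolynomialGrowth

theorem finrank_restrictTotalDegree (σ R : Type*) [Fintype σ] [CommRing R] [Nontrivial R] (k : ℕ) :
    Module.finrank R (restrictTotalDegree σ R k) =
      (Fintype.card σ + k).choose (Fintype.card σ) := by
  classical
  have exponents_eq : {n : σ →₀ ℕ | (n.sum fun _ e => e) ≤ k} =
      ((Finset.range (k + 1)).biUnion (Finset.univ.finsuppAntidiag) : Finset (σ →₀ ℕ)) := by
    ext n
    simp [Finsupp.sum_fintype]
  rw [restrictTotalDegree, Module.finrank_eq_nat_card_basis (basisRestrictSupport R _),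
    exponents_eq, Nat.card_coe_set_eq, Set.ncard_coe_finset, Finset.card_biUnion]
  · simp only [Finset.card_finsuppAntidiag_nat_eq_multichoose, Finset.card_univ]
    rw [Nat.sum_range_multichoose, add_comm]
  · intro d _ e _ hde
    refine Finset.disjoint_left.2 fun n hd he => hde ?_
    exact (Finset.mem_finsuppAntidiag.1 hd).1.symm.trans (Finset.mem_finsuppAntidiag.1 he).1

section PointIdeal

variable {p : ℕ}

theorem evalAlgHom_apply (x : EuclideanSpace ℝ (Fin p)) (f : SmoothFn p) : evalAlgHom x f = f x :=
  rfl

/-- The ideal `I_x` of smooth functions on `ℝ^p` vanishing at `x`. -/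
abbrev pointIdeal (x : EuclideanSpace ℝ (Fin p)) : Ideal (SmoothFn p) :=
  RingHom.ker (evalAlgHom x)

/-- The `i`-th coordinate function centred at `x`, that is, `π_i - x_i`. -/
def centeredCoord (x : EuclideanSpace ℝ (Fin p)) (i : Fin p) : SmoothFn p :=
  ⟨fun y => y i - x i, contMDiff_iff_contDiff.2 (by fun_prop)⟩

theorem centeredCoord_apply (x y : EuclideanSpace ℝ (Fin p)) (i : Fin p) :
    centeredCoord x i y = y i - x i :=
  rfl

theorem aeval_centeredCoord_apply (x y : EuclideanSpace ℝ (Fin p)) (P : MvPolynomial (Fin p) ℝ) :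
    aeval (centeredCoord x) P y = eval (y - x).ofLp P := by
  rw [← evalAlgHom_apply, comp_aeval_apply, aeval_eq_eval]
  rfl

theorem exists_eq_sum_centeredCoord_mul {x : EuclideanSpace ℝ (Fin p)} {f : SmoothFn p}
    (hf : f ∈ pointIdeal x) : ∃ g : Fin p → SmoothFn p, f = ∑ i, g i * centeredCoord x i := by
  obtain ⟨g, hg, hfg⟩ := exists_contDiff_eq_add_apply_sub (n := ⊤)
    (contMDiff_iff_contDiff.1 f.contMDiff) x
  refine ⟨fun i => ⟨fun y => g y (EuclideanSpace.single i 1),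
    contMDiff_iff_contDiff.2 (hg.clm_apply contDiff_const)⟩, ?_⟩
  ext y
  have hsub : y - x = ∑ i, (y i - x i) • EuclideanSpace.single i (1 : ℝ) := by
    ext j
    simp [Finset.sum_apply, Pi.single_apply]
  have hfx : f x = 0 := hf
  calc
    f y = g y (y - x) := by rw [hfg y, hfx, zero_add]
    _ = g y (∑ i, (y i - x i) • EuclideanSpace.single i 1) := by rw [← hsub]
    _ = ∑ i, g y (EuclideanSpace.single i 1) * (y i - x i) := by
      simp only [map_sum, map_smul, smul_eq_mul, mul_comm]
    _ = _ := by rw [← evalAlgHom_apply, map_sum]; rfl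

theorem pointIdeal_eq_span_centeredCoord (x : EuclideanSpace ℝ (Fin p)) :
    pointIdeal x = Ideal.span (Set.range (centeredCoord x)) := by
  refine le_antisymm (fun f hf => ?_) (Ideal.span_le.2 ?_)
  · obtain ⟨g, rfl⟩ := exists_eq_sum_centeredCoord_mul hf
    exact Ideal.sum_mem _ fun i _ =>
      Ideal.mul_mem_left _ _ (Ideal.subset_span (Set.mem_range_self i))
  · rintro _ ⟨i, rfl⟩
    exact (centeredCoord_apply x x i).trans (sub_self _)

theorem isBigO_of_mem_pointIdeal_pow {x : EuclideanSpace ℝ (Fin p)} {n : ℕ} {f : SmoothFn p}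
    (hf : f ∈ pointIdeal x ^ n) : f =O[𝓝 x] fun y => ‖y - x‖ ^ n := by
  induction n generalizing f with
  | zero =>
    simpa using f.contMDiff.continuous.continuousAt.isBigO_one ℝ
  | succ n ih =>
    rw [pow_succ] at hf
    induction hf using Submodule.mul_induction_on' with
    | mem_mul_mem f hf g hg =>
      have hgx : g x = 0 := hg
      have hgO : g =O[𝓝 x] fun y => ‖y - x‖ := by
        simpa [hgx] using
          ((contMDiff_iff_contDiff.1 g.contMDiff).differentiable (by simp) x).isBigO_sub.norm_right
      simp only [pow_succ]
      exact (ih hf).mul hgO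
    | add f _ g _ hf hg => exact hf.add hg

theorem eq_zero_of_aeval_centeredCoord_mem_pointIdeal_pow {x : EuclideanSpace ℝ (Fin p)} {k : ℕ}
    {P : MvPolynomial (Fin p) ℝ} (hdeg : P.totalDegree ≤ k)
    (hP : aeval (centeredCoord x) P ∈ pointIdeal x ^ (k + 1)) : P = 0 := by
  refine eq_zero_of_forall_eval_smul_isBigO hdeg fun v => ?_
  have hline : Filter.Tendsto (fun t : ℝ => x + t • WithLp.toLp 2 v) (𝓝 0) (𝓝 x) := by
    have : Continuous fun t : ℝ => x + t • WithLp.toLp 2 v := by fun_prop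
    simpa using this.tendsto 0
  have h := (isBigO_of_mem_pointIdeal_pow hP).comp_tendsto hline
  simp only [Function.comp_def, aeval_centeredCoord_apply, add_sub_cancel_left, norm_smul,
    mul_pow] at h
  refine h.trans ?_
  simpa [mul_comm] using
    (isBigO_refl (fun t : ℝ => t ^ (k + 1)) (𝓝 0)).norm_left.const_mul_left
      (‖WithLp.toLp 2 v‖ ^ (k + 1))

/-- The linear map sending a polynomial of degree at most `k` in the coordinates centred at `x` to
its class in the algebra of `k`-jets at `x`; Taylor expansion is its inverse. -/
def polynomialJet (x : EuclideanSpace ℝ (Fin p)) (k : ℕ) :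
    restrictTotalDegree (Fin p) ℝ k →ₗ[ℝ] SmoothFn p ⧸ pointIdeal x ^ (k + 1) :=
  ((Ideal.Quotient.mkₐ ℝ _).comp (aeval (centeredCoord x))).toLinearMap.domRestrict _

theorem polynomialJet_bijective (x : EuclideanSpace ℝ (Fin p)) (k : ℕ) :
    Function.Bijective (polynomialJet x k) := by
  constructor
  · rw [injective_iff_map_eq_zero]
    rintro ⟨P, hdeg⟩ hP
    exact Subtype.ext (eq_zero_of_aeval_centeredCoord_mem_pointIdeal_pow
      ((mem_restrictTotalDegree _ _ _).1 hdeg) (Ideal.Quotient.eq_zero_iff_mem.1 hP))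
  · intro a
    obtain ⟨f, rfl⟩ := Ideal.Quotient.mk_surjective a
    obtain ⟨P, hdeg, hP⟩ := exists_totalDegree_le_sub_aeval_mem_ker_pow
      (pointIdeal_eq_span_centeredCoord x) k f
    exact ⟨⟨P, (mem_restrictTotalDegree _ _ _).2 hdeg⟩, (Ideal.Quotient.eq.2 hP).symm⟩

end PointIdeal

/-- Quotients of the smooth function algebra by powers of a point ideal are Weil algebras:
`A = C^∞(ℝ^p, ℝ)/I_x^{k+1}` is finite-dimensional of dimension `C(p+k, p)`, the image of
`I_x` in `A` is nilpotent with `(k+1)`-st power zero, and `A = ℝ·1 ⊕ I_x/I_x^{k+1}`. -/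
theorem quotient_by_point_ideal_power_is_weil (p k : ℕ) (x : EuclideanSpace ℝ (Fin p)) :
    FiniteDimensional ℝ (SmoothFn p ⧸ (RingHom.ker (evalAlgHom x).toRingHom) ^ (k + 1)) ∧
    Module.finrank ℝ (SmoothFn p ⧸ (RingHom.ker (evalAlgHom x).toRingHom) ^ (k + 1)) =
      (p + k).choose p ∧
    (Ideal.map (Ideal.Quotient.mk ((RingHom.ker (evalAlgHom x).toRingHom) ^ (k + 1)))
        (RingHom.ker (evalAlgHom x).toRingHom)) ^ (k + 1) = ⊥ ∧
    IsCompl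
      (Submodule.span ℝ
        {(1 : SmoothFn p ⧸ (RingHom.ker (evalAlgHom x).toRingHom) ^ (k + 1))})
      (Submodule.restrictScalars ℝ
        (Ideal.map (Ideal.Quotient.mk ((RingHom.ker (evalAlgHom x).toRingHom) ^ (k + 1)))
          (RingHom.ker (evalAlgHom x).toRingHom))) := by
  let e := LinearEquiv.ofBijective (polynomialJet x k) (polynomialJet_bijective x k)
  refine ⟨Module.Finite.equiv e, ?_, ?_, ?_⟩
  · exact e.finrank_eq.symm.trans (by rw [finrank_restrictTotalDegree, Fintype.card_fin])
  · rw [← Ideal.map_pow, Ideal.map_quotient_self]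
  · rw [← Submodule.one_eq_span]
    exact isAugmentation_map_mk_ker (ε := evalAlgHom x) (Ideal.pow_le_self k.succ_ne_zero)
end
end
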